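/- arXiv:2509.11001 — 3 statements merged into one kernel-verified Lean document; each statement's English description precedes it below -/
import Mathlib

section
/- Let n be a natural number with prime factorisation n = p_1^{α_1} ⋯ p_t^{α_t} (the p_i distinct primes). Then every skew brace of order n is almost trivial (i.e., a ∘ b = b + a for all a, b) if and only if α_i = 1 for every i and p_i does not divide p_j − 1 for all i ≠ j. -/
/-- A skew (left) brace: a set with two group structures `(A,+)` and `(A,∘)`
(the latter written multiplicatively) satisfying
`a ∘ (b + c) = a ∘ b - a + a ∘ c`. -/
class SkewBrace (A : Type*) extends AddGroup A, Group A where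
  skew_left_distrib : ∀ a b c : A, a * (b + c) = a * b - a + a * c

/-!
Both conditions say that `n` is coprime to `φ n`. If it is, then every group of order `n` is cyclic,
with an automorphism group of order `φ n`; hence the homomorphism `λ : (A, ∘) → Aut (A, +)`,
`λ_a b = -a + a ∘ b`, is trivial, so that `a ∘ b = a + b`, and `+` is commutative.

Conversely, let a prime `p` divide both `n` and `φ n`. The kernel of `(ℤ/n)ˣ → (ℤ/p)ˣ` has order
`φ n / (p - 1)`, a multiple of `p`, so it contains a unit `u` of order `p`. Since `u ≡ 1` modulo `p`
and `u ^ p = 1`, the operation `a ∘ b = a + u ^ a * b` makes `ℤ/n` a skew brace, which is not almost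
trivial.
-/

open scoped Nat

section Totient

theorem prime_dvd_totient_iff {n p : ℕ} (hn : n ≠ 0) (hp : p.Prime) :
    p ∣ φ n ↔ 1 < n.factorization p ∨ ∃ q ∈ n.primeFactors, p ∣ q - 1 := by
  rw [Nat.totient_eq_prod_factorization hn, Finsupp.prod, hp.prime.dvd_finsetProd_iff,
    Nat.support_factorization]
  simp only [hp.dvd_mul]
  constructor
  · rintro ⟨q, hq, hpow | hsub⟩
    · obtain rfl : p = q :=
        (Nat.prime_dvd_prime_iff_eq hp (Nat.prime_of_mem_primeFactors hq)).mp
          (hp.dvd_of_dvd_pow hpow)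
      refine .inl (Nat.sub_ne_zero_iff_lt.mp fun h => hp.not_dvd_one ?_)
      rwa [h, pow_zero] at hpow
    · exact .inr ⟨q, hq, hsub⟩
  · rintro (hlt | ⟨q, hq, hsub⟩)
    · have hmem : p ∈ n.primeFactors := by
        rw [← Nat.support_factorization, Finsupp.mem_support_iff]
        exact (zero_lt_one.trans hlt).ne'
      exact ⟨p, hmem, .inl (dvd_pow_self p (Nat.sub_ne_zero_of_lt hlt))⟩
    · exact ⟨q, hq, .inr hsub⟩

theorem coprime_totient_iff {n : ℕ} (hn : n ≠ 0) :
    n.Coprime (φ n) ↔ (∀ p ∈ n.primeFactors, n.factorization p = 1) ∧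
      (∀ p ∈ n.primeFactors, ∀ q ∈ n.primeFactors, p ≠ q → ¬ p ∣ q - 1) := by
  constructor
  · intro hcop
    have not_lt_or_dvd {p : ℕ} (hp : p ∈ n.primeFactors) :
        ¬ (1 < n.factorization p ∨ ∃ q ∈ n.primeFactors, p ∣ q - 1) := by
      rw [← prime_dvd_totient_iff hn (Nat.prime_of_mem_primeFactors hp)]
      exact fun hdvd => Nat.not_coprime_of_dvd_of_dvd
        (Nat.prime_of_mem_primeFactors hp).one_lt (Nat.dvd_of_mem_primeFactors hp) hdvd hcop
    refine ⟨fun p hp => ?_, fun p hp q hq _ hdvd => not_lt_or_dvd hp (.inr ⟨q, hq, hdvd⟩)⟩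
    have hpos : 0 < n.factorization p := (Nat.prime_of_mem_primeFactors hp).factorization_pos_of_dvd
      hn (Nat.dvd_of_mem_primeFactors hp)
    exact le_antisymm (not_lt.mp fun hlt => not_lt_or_dvd hp (.inl hlt)) hpos
  · rintro ⟨hfact, hsub⟩
    refine Nat.coprime_of_dvd fun p hp hpn hdvd => ?_
    have hmem : p ∈ n.primeFactors := Nat.mem_primeFactors.mpr ⟨hp, hpn, hn⟩
    obtain hlt | ⟨q, hq, hpq⟩ := (prime_dvd_totient_iff hn hp).mp hdvd
    · exact hlt.ne' (hfact p hmem)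
    · refine hsub p hmem q hq ?_ hpq
      rintro rfl
      exact Nat.not_dvd_of_pos_of_lt (Nat.sub_pos_of_lt hp.one_lt) (Nat.sub_one_lt hp.ne_zero) hpq

theorem squarefree_of_coprime_totient {n : ℕ} (h : n.Coprime (φ n)) : Squarefree n := by
  refine Nat.squarefree_iff_prime_squarefree.mpr fun p hp hpp => ?_
  have hdvd : p ∣ φ n :=
    (Dvd.intro _ (Nat.totient_mul_of_prime_of_dvd hp dvd_rfl).symm).trans
      (Nat.totient_dvd_of_dvd hpp)
  exact Nat.not_coprime_of_dvd_of_dvd hp.one_lt ((Dvd.intro _ rfl).trans hpp) hdvd h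

end Totient

section Group

theorem monoidHom_eq_one_of_coprime_card {G H : Type*} [Group G] [Group H]
    (h : (Nat.card G).Coprime (Nat.card H)) (f : G →* H) : f = 1 := by
  ext g
  exact orderOf_eq_one_iff.mp <| Nat.eq_one_of_dvd_coprimes h
    ((orderOf_map_dvd f g).trans (orderOf_dvd_natCard g)) (orderOf_dvd_natCard (f g))

theorem le_center_of_isCyclic_of_coprime_totient {G : Type*} [Group G] (N : Subgroup G) [N.Normal]
    [Finite N] [IsCyclic N] (h : (Nat.card G).Coprime (φ (Nat.card N))) :
    N ≤ Subgroup.center G := by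
  intro x hx
  rw [Subgroup.mem_center_iff]
  intro g
  have hconj : (MulAut.conjNormal : G →* MulAut N) = 1 :=
    monoidHom_eq_one_of_coprime_card (by rwa [IsCyclic.card_mulAut]) _
  have hgx : g * x * g⁻¹ = x := by
    rw [← MulAut.conjNormal_apply g (⟨x, hx⟩ : N), hconj]
    rfl
  exact mul_inv_eq_iff_eq_mul.mp hgx

theorem isCyclic_of_coprime_totient {G : Type*} [Group G]
    (h : (Nat.card G).Coprime (φ (Nat.card G))) : IsCyclic G := by
  have hsq := squarefree_of_coprime_totient h
  have : Finite G := Nat.finite_of_card_ne_zero hsq.ne_zero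
  have : IsZGroup G := .of_squarefree hsq
  have : IsCyclic (commutator G) := IsZGroup.isCyclic_commutator G
  have hcenter : (Abelianization.of (G := G)).ker ≤ Subgroup.center G := by
    rw [Abelianization.ker_of]
    exact le_center_of_isCyclic_of_coprime_totient _ <|
      h.coprime_dvd_right (Nat.totient_dvd_of_dvd (Subgroup.card_subgroup_dvd_card _))
  have : Group.IsNilpotent G := Subgroup.isNilpotent_of_ker_le_center _ hcenter
  infer_instance

theorem card_addAut_of_isAddCyclic (A : Type*) [AddGroup A] [Finite A] [IsAddCyclic A] :
    Nat.card (Multiplicative (AddAut A)) = φ (Nat.card A) := by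
  rw [← Nat.card_congr (MulAutMultiplicative A).toEquiv, IsCyclic.card_mulAut]
  rfl

end Group

section ZMod

theorem exists_orderOf_eq_and_unitsMap_eq_one {n p : ℕ} [NeZero n] (hp : p.Prime)
    (hpn : p ∣ n) (hdvd : p ∣ φ n) : ∃ u : (ZMod n)ˣ, orderOf u = p ∧ ZMod.unitsMap hpn u = 1 := by
  have : Fact p.Prime := ⟨hp⟩
  have hcard : Nat.card (ZMod.unitsMap hpn).ker * (p - 1) = φ n := by
    rw [← Nat.totient_prime hp, ← ZMod.card_units_eq_totient p, ← ZMod.card_units_eq_totient n,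
      ← Nat.card_eq_fintype_card, ← Nat.card_eq_fintype_card,
      ← Subgroup.card_mul_index (ZMod.unitsMap hpn).ker, Subgroup.index_ker,
      MonoidHom.range_eq_top.mpr (ZMod.unitsMap_surjective hpn), Subgroup.card_top]
  have hcop : p.Coprime (p - 1) := (Nat.coprime_self_sub_right hp.one_le).mpr p.coprime_one_right
  obtain ⟨u, hu⟩ := exists_prime_orderOf_dvd_card' p (hcop.dvd_of_dvd_mul_right (hcard ▸ hdvd))
  exact ⟨u, (Subgroup.orderOf_coe u).trans hu, u.2⟩

theorem pow_val_add_pow_val_mul {n d : ℕ} [NeZero n] {hd : d ∣ n} {u : (ZMod n)ˣ}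
    (hpow : u ^ d = 1) (hmap : ZMod.unitsMap hd u = 1) (a b : ZMod n) :
    u ^ (a + ↑(u ^ a.val) * b).val = u ^ a.val * u ^ b.val := by
  rw [← pow_add, pow_eq_pow_iff_modEq]
  refine Nat.ModEq.of_dvd (orderOf_dvd_of_pow_eq_one hpow) ?_
  have hu : ZMod.castHom hd (ZMod d) u = 1 := congrArg Units.val hmap
  rw [← ZMod.natCast_eq_natCast_iff, ← map_natCast (ZMod.castHom hd (ZMod d)),
    ← map_natCast (ZMod.castHom hd (ZMod d))]
  simp [-ZMod.castHom_apply, hu]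

end ZMod

namespace SkewBrace

/-- A skew brace is almost trivial if its multiplicative group is the opposite of its additive
group. -/
def IsAlmostTrivial (A : Type*) [SkewBrace A] : Prop :=
  ∀ a b : A, a * b = b + a

section Lambda

variable {A : Type*} [SkewBrace A]

theorem one_eq_zero : (1 : A) = 0 := by
  simpa using skew_left_distrib (1 : A) 0 0

protected theorem mul_zero (a : A) : a * 0 = a := by
  rw [← one_eq_zero, mul_one]

protected theorem mul_neg (a b : A) : a * -b = a - a * b + a := by
  have h : a = a * b - a + a * -b := by
    rw [← skew_left_distrib, add_neg_cancel, SkewBrace.mul_zero]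
  rw [← neg_sub (a * b) a, eq_neg_add_iff_add_eq, ← h]

variable (A) in
/-- The action `λ_a b = -a + a ∘ b` of the multiplicative group of a skew brace on its additive
group. -/
def lambda : A →* Multiplicative (AddAut A) where
  toFun a := .ofAdd
    { toFun := fun b => -a + a * b
      invFun := fun b => a⁻¹ * (a + b)
      left_inv := fun b => by simp
      right_inv := fun b => by simp
      map_add' := fun b c => by simp only [skew_left_distrib, sub_eq_add_neg, add_assoc] }
  map_one' := Multiplicative.toAdd.injective <| AddEquiv.ext fun b =>
    show -1 + 1 * b = b by rw [one_mul, one_eq_zero, neg_zero, zero_add]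
  map_mul' a b := Multiplicative.toAdd.injective <| AddEquiv.ext fun c =>
    show -(a * b) + a * b * c = -a + a * (-b + b * c) by
      rw [skew_left_distrib, SkewBrace.mul_neg, mul_assoc]
      simp only [sub_eq_add_neg, add_assoc, neg_add_cancel_left, add_neg_cancel_left]

theorem mul_eq_add_lambda (a b : A) : a * b = a + (lambda A a).toAdd b :=
  (add_neg_cancel_left a (a * b)).symm

theorem isAlmostTrivial_of_coprime_totient (h : (Nat.card A).Coprime (φ (Nat.card A))) :
    IsAlmostTrivial A := by
  intro a b
  have : Finite A := Nat.finite_of_card_ne_zero (squarefree_of_coprime_totient h).ne_zero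
  have : IsAddCyclic A := isCyclic_multiplicative_iff.mp (isCyclic_of_coprime_totient h)
  have hlambda : lambda A = 1 :=
    monoidHom_eq_one_of_coprime_card (by rwa [card_addAut_of_isAddCyclic]) _
  calc
    a * b = a + b := by rw [mul_eq_add_lambda, hlambda]; rfl
    _ = b + a := IsAddCommutative.is_comm.comm a b

end Lambda

section OfAddAut

variable {A : Type*} [AddGroup A] (f : A → AddAut A) (hf : ∀ a b, f (a + f a b) = f a + f b)

/-- The skew brace `a ∘ b = a + f_a b` on an additive group, defined by a family of automorphisms
that is multiplicative for `∘`; composition in `AddAut A` is written as addition. -/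
abbrev ofAddAut : SkewBrace A where
  __ := ‹AddGroup A›
  __ : Group A :=
    have map_zero : f 0 = 0 := by simpa using hf 0 0
    letI : Mul A := ⟨fun a b => a + f a b⟩
    letI : One A := ⟨0⟩
    letI : Inv A := ⟨fun a => (f a).symm (-a)⟩
    Group.ofLeftAxioms
      (fun a b c => show a + f a b + f (a + f a b) c = a + f a (b + f b c) by
        rw [hf, map_add, add_assoc]; rfl)
      (fun a => show 0 + f 0 a = a by rw [map_zero, zero_add]; rfl)
      (fun a => show (f a).symm (-a) + f ((f a).symm (-a)) a = 0 by
        have hneg : f a + f ((f a).symm (-a)) = 0 := by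
          rw [← hf, AddEquiv.apply_symm_apply, add_neg_cancel, map_zero]
        rw [eq_neg_of_add_eq_zero_right hneg]
        change (f a).symm (-a) + (f a).symm a = 0
        rw [← map_add, neg_add_cancel, _root_.map_zero])
  skew_left_distrib a b c :=
    show a + f a (b + c) = a + f a b - a + (a + f a c) by
      rw [map_add, sub_eq_add_neg, add_assoc _ (-a), neg_add_cancel_left, add_assoc]

end OfAddAut

section OfUnit

variable {n d : ℕ} [NeZero n] {hd : d ∣ n} {u : (ZMod n)ˣ}

/-- The skew brace `a ∘ b = a + u ^ a * b` on `ℤ/n`, where `u` is a unit with `u ^ d = 1` and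
`u ≡ 1` modulo `d`; the exponent `a` only matters modulo `d`. -/
abbrev ofUnit (hpow : u ^ d = 1) (hmap : ZMod.unitsMap hd u = 1) : SkewBrace (ZMod n) :=
  ofAddAut (fun a => (AddAut.mulLeft (u ^ a.val)).toAdd) fun a b => by
    rw [← toAdd_mul, ← map_mul, ← pow_val_add_pow_val_mul hpow hmap]
    rfl

theorem isAlmostTrivial_ofUnit_iff (hpow : u ^ d = 1) (hmap : ZMod.unitsMap hd u = 1) :
    @IsAlmostTrivial (ZMod n) (ofUnit hpow hmap) ↔ u = 1 := by
  change (∀ a b : ZMod n, a + ↑(u ^ a.val) * b = b + a) ↔ u = 1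
  refine ⟨fun h => ?_, fun h a b => by simp [h, add_comm]⟩
  obtain rfl | hn : n = 1 ∨ 1 < n := by have := NeZero.pos n; omega
  · exact Subsingleton.elim _ _
  · have : Fact (1 < n) := ⟨hn⟩
    exact Units.ext (by simpa [ZMod.val_one] using h 1 1)

end OfUnit

theorem exists_not_isAlmostTrivial_of_not_coprime_totient {n : ℕ} [NeZero n]
    (h : ¬ n.Coprime (φ n)) : ∃ B : SkewBrace (ZMod n), ¬ @IsAlmostTrivial (ZMod n) B := by
  obtain ⟨p, hp, hpn, hdvd⟩ := Nat.Prime.not_coprime_iff_dvd.mp h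
  obtain ⟨u, hord, hmap⟩ := exists_orderOf_eq_and_unitsMap_eq_one hp hpn hdvd
  refine ⟨ofUnit (hord ▸ pow_orderOf_eq_one u) hmap, fun htriv => hp.ne_one ?_⟩
  rw [← hord, (isAlmostTrivial_ofUnit_iff _ hmap).mp htriv, orderOf_one]

end SkewBrace

/-- Every skew brace of order `n` is almost trivial (`a ∘ b = b + a`) if and
only if `n` is square-free and `p ∤ q - 1` for all distinct primes `p, q`
dividing `n`. -/
theorem every_skewBrace_is_almost_trivial_iff (n : ℕ) (hn : 0 < n) :
    (∀ (A : Type) [Fintype A] [SkewBrace A], Fintype.card A = n →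
      (∀ a b : A, a * b = b + a)) ↔
    ((∀ p ∈ n.primeFactors, n.factorization p = 1) ∧
      (∀ p ∈ n.primeFactors, ∀ q ∈ n.primeFactors, p ≠ q → ¬ p ∣ q - 1)) := by
  rw [← coprime_totient_iff hn.ne']
  constructor
  · intro htriv
    have : NeZero n := ⟨hn.ne'⟩
    by_contra hcop
    obtain ⟨_, hB⟩ := SkewBrace.exists_not_isAlmostTrivial_of_not_coprime_totient hcop
    exact hB (htriv (ZMod n) (ZMod.card n))
  · rintro hcop A _ _ rfl
    rw [← Nat.card_eq_fintype_card] at hcop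
    exact SkewBrace.isAlmostTrivial_of_coprime_totient hcop
end

section
/- Let n be a natural number with prime factorisation n = p_1^{α_1} ⋯ p_t^{α_t} (the p_i distinct primes). Then every skew brace of order n is a brace (i.e., has abelian additive group) if and only if α_i ≤ 2 for every i and p_i does not divide p_j^{α_j} − 1 for all i ≠ j. -/
/-!
Every group is the additive group of a skew brace, namely of the one whose two operations agree.
So the theorem says for which `n` all groups of order `n` are commutative, a question settled by
Dickson and governed by the primes dividing `|Aut N|` for groups `N` of prime power order.

If `p ∣ |Aut N|`, then `N ⋊ C_p` is a noncommutative group of order `|N| p`. Taking `N = (C_q)^k`,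
where `|Aut N| = ∏ i < k, (q^k - q^i)`, gives both conditions: for `q = p` and `k = 2` look at the
factor `i = 1`, and for `q ≠ p` and `k = α_q` look at the factor `i = 0`.

Conversely, the conditions make every Sylow subgroup `P` of `G` commutative, with `|Aut P|` coprime
to its index. Hence `N(P) = C(P)`, and Burnside's transfer theorem shows that no prime divides the
order of the commutator subgroup.
-/

section Necessity

theorem semidirectProduct_hom_eq_one {N H : Type*} [Group N] [Group H] (φ : H →* MulAut N)
    [IsMulCommutative (N ⋊[φ] H)] : φ = 1 := by
  ext h x
  apply SemidirectProduct.inl_injective (φ := φ)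
  rw [SemidirectProduct.inl_aut, mul_comm' (SemidirectProduct.inr h), mul_assoc, ← map_mul,
    mul_inv_cancel, map_one, mul_one, MonoidHom.one_apply, MulAut.one_apply]

/-- An *abelian number*: a natural number `n` such that all groups of order `n` are commutative.
Finiteness is required separately because `Nat.card` vanishes on infinite groups. Every finite group
is isomorphic to one in `Type`, so no larger universe is needed. -/
def IsAbelianNumber (n : ℕ) : Prop :=
  ∀ (G : Type) [Group G] [Finite G], Nat.card G = n → IsMulCommutative G

namespace IsAbelianNumber

theorem of_dvd {m n : ℕ} (h : IsAbelianNumber n) (hn : n ≠ 0) (hmn : m ∣ n) :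
    IsAbelianNumber m := by
  intro G _ _ hG
  obtain ⟨d, rfl⟩ := hmn
  have : NeZero d := ⟨right_ne_zero_of_mul hn⟩
  have : IsMulCommutative (G × Multiplicative (ZMod d)) :=
    h _ (by rw [Nat.card_prod, hG, Nat.card_congr Multiplicative.toAdd, Nat.card_zmod])
  exact .of_comm fun a b ↦ congrArg Prod.fst
    (mul_comm' (a, (1 : Multiplicative (ZMod d))) (b, 1))

theorem not_dvd_card_mulAut {N : Type} [Group N] [Finite N] {p : ℕ} [hp : Fact p.Prime]
    (h : IsAbelianNumber (Nat.card N * p)) : ¬p ∣ Nat.card (MulAut N) := by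
  intro hdvd
  obtain ⟨f, hf⟩ := exists_prime_orderOf_dvd_card' p hdvd
  let φ : Subgroup.zpowers f →* MulAut N := (Subgroup.zpowers f).subtype
  have : Finite (N ⋊[φ] Subgroup.zpowers f) := .of_equiv _ SemidirectProduct.equivProd.symm
  have : IsMulCommutative (N ⋊[φ] Subgroup.zpowers f) :=
    h _ (by rw [SemidirectProduct.card, Nat.card_zpowers, hf])
  have hf_one : φ ⟨f, Subgroup.mem_zpowers f⟩ = 1 :=
    DFunLike.congr_fun (semidirectProduct_hom_eq_one φ) _
  rw [show f = 1 from hf_one, orderOf_one] at hf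
  exact hp.out.ne_one hf.symm

end IsAbelianNumber

theorem card_linearEquiv_dvd_card_mulAut (R V : Type*) [Semiring R] [AddCommMonoid V]
    [Module R V] :
    Nat.card (V ≃ₗ[R] V) ∣ Nat.card (MulAut (Multiplicative V)) := by
  let toMulAut : (V ≃ₗ[R] V) →* MulAut (Multiplicative V) :=
    { toFun f := AddEquiv.toMultiplicative f.toAddEquiv
      map_one' := rfl
      map_mul' _ _ := rfl }
  refine Subgroup.card_dvd_of_injective toMulAut fun f g hfg ↦ ?_
  ext v
  exact DFunLike.congr_fun hfg (Multiplicative.ofAdd v)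

theorem card_pow_sub_card_pow_dvd_card_mulAut (F : Type*) [Field F] [Finite F] {k i : ℕ}
    (hi : i < k) :
    Nat.card F ^ k - Nat.card F ^ i ∣ Nat.card (MulAut (Multiplicative (Fin k → F))) := by
  have := Fintype.ofFinite F
  let e : GL (Fin k) F ≃* ((Fin k → F) ≃ₗ[F] (Fin k → F)) :=
    Matrix.GeneralLinearGroup.toLin.trans (LinearMap.GeneralLinearGroup.generalLinearEquiv F _)
  calc Nat.card F ^ k - Nat.card F ^ i
      ∣ ∏ j : Fin k, (Nat.card F ^ k - Nat.card F ^ (j : ℕ)) :=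
        Finset.dvd_prod_of_mem _ (Finset.mem_univ (⟨i, hi⟩ : Fin k))
    _ = Nat.card ((Fin k → F) ≃ₗ[F] (Fin k → F)) := by
        rw [← Nat.card_congr e.toEquiv, Matrix.card_GL_field, Nat.card_eq_fintype_card]
    _ ∣ Nat.card (MulAut (Multiplicative (Fin k → F))) := card_linearEquiv_dvd_card_mulAut F _

namespace IsAbelianNumber

theorem not_dvd_pow_sub_pow {p q k i : ℕ} [Fact p.Prime] [Fact q.Prime]
    (h : IsAbelianNumber (q ^ k * p)) (hi : i < k) : ¬p ∣ q ^ k - q ^ i := by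
  have hcard : Nat.card (Multiplicative (Fin k → ZMod q)) = q ^ k := by
    rw [Nat.card_congr Multiplicative.toAdd, Nat.card_fun, Nat.card_zmod, Nat.card_fin]
  rw [← hcard] at h
  intro hdvd
  refine h.not_dvd_card_mulAut (hdvd.trans ?_)
  simpa only [Nat.card_zmod] using card_pow_sub_card_pow_dvd_card_mulAut (ZMod q) hi

variable {n p : ℕ}

theorem factorization_le_two (h : IsAbelianNumber n) (hn : n ≠ 0) (hp : p.Prime) :
    n.factorization p ≤ 2 := by
  by_contra! hlt
  have : Fact p.Prime := ⟨hp⟩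
  have hcube : p ^ 2 * p ∣ n := (hp.pow_dvd_iff_le_factorization hn).2 hlt
  refine (h.of_dvd hn hcube).not_dvd_pow_sub_pow one_lt_two (Nat.dvd_sub ?_ ?_)
  exacts [dvd_pow_self p two_ne_zero, dvd_pow_self p one_ne_zero]

theorem not_dvd_pow_factorization_sub_one (h : IsAbelianNumber n) (hn : n ≠ 0)
    (hp : p ∈ n.primeFactors) {q : ℕ} (hq : q ∈ n.primeFactors) (hpq : p ≠ q) :
    ¬p ∣ q ^ n.factorization q - 1 := by
  have : Fact p.Prime := ⟨Nat.prime_of_mem_primeFactors hp⟩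
  have : Fact q.Prime := ⟨Nat.prime_of_mem_primeFactors hq⟩
  have hcoprime : (q ^ n.factorization q).Coprime p :=
    .pow_left _ ((Nat.coprime_primes Fact.out Fact.out).2 hpq.symm)
  have hdvd : q ^ n.factorization q * p ∣ n :=
    hcoprime.mul_dvd_of_dvd_of_dvd (Nat.ordProj_dvd n q) (Nat.dvd_of_mem_primeFactors hp)
  have hpos : 0 < n.factorization q :=
    Nat.Prime.factorization_pos_of_dvd Fact.out hn (Nat.dvd_of_mem_primeFactors hq)
  simpa only [pow_zero] using (h.of_dvd hn hdvd).not_dvd_pow_sub_pow hpos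

end IsAbelianNumber

end Necessity

section Sufficiency

theorem isMulCommutative_of_card_eq_prime_pow {P : Type*} [Group P] {p k : ℕ} [Fact p.Prime]
    (hP : Nat.card P = p ^ k) (hk : k ≤ 2) : IsMulCommutative P := by
  interval_cases k
  · have := (Nat.card_eq_one_iff_unique.1 hP).1
    exact .of_comm fun _ _ ↦ Subsingleton.elim _ _
  · have := isCyclic_of_prime_card (hP.trans (pow_one p))
    infer_instance
  · exact IsPGroup.isMulCommutative_of_card_eq_prime_sq hP

section PrimePowerOrder

variable {p q k : ℕ} [Fact p.Prime] [Fact q.Prime] {P : Type*} [Group P]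

theorem exists_dvd_pow_sub_one_of_fixedPoints_ne_top {Q : Type*} [Group Q]
    [MulDistribMulAction Q P] (hP : Nat.card P = p ^ k) (hQ : IsPGroup q Q) (hpq : p ≠ q)
    (hfix : FixedPoints.subgroup Q P ≠ ⊤) : ∃ i, 0 < i ∧ i ≤ k ∧ q ∣ p ^ i - 1 := by
  have hp : p.Prime := Fact.out
  have hq : q.Prime := Fact.out
  have : Finite P := Nat.finite_of_card_ne_zero (hP ▸ pow_ne_zero k hp.ne_zero)
  obtain ⟨j, hjk, hj⟩ : ∃ j ≤ k, Nat.card (FixedPoints.subgroup Q P) = p ^ j :=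
    (Nat.dvd_prime_pow hp).1 (hP ▸ Subgroup.card_subgroup_dvd_card _)
  have hne : j ≠ k := by
    rintro rfl
    exact hfix (Subgroup.eq_top_of_card_eq _ (hj.trans hP.symm))
  have hmod : p ^ k ≡ p ^ j [MOD q] := hP ▸ hj ▸ hQ.card_modEq_card_fixedPoints P
  have hdvd : q ∣ p ^ j * (p ^ (k - j) - 1) := by
    rw [Nat.mul_sub, ← pow_add, Nat.add_sub_cancel' hjk, mul_one]
    exact (Nat.modEq_iff_dvd' (Nat.pow_le_pow_right hp.pos hjk)).1 hmod.symm
  have hcoprime : q.Coprime (p ^ j) := .pow_right _ ((Nat.coprime_primes hq hp).2 hpq.symm)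
  exact ⟨k - j, by omega, by omega, hcoprime.dvd_of_dvd_mul_left hdvd⟩

theorem exists_dvd_pow_sub_one_of_dvd_card_mulAut (hP : Nat.card P = p ^ k) (hpq : p ≠ q)
    (hdvd : q ∣ Nat.card (MulAut P)) : ∃ i, 0 < i ∧ i ≤ k ∧ q ∣ p ^ i - 1 := by
  have : Finite P := Nat.finite_of_card_ne_zero (hP ▸ pow_ne_zero k (NeZero.ne p))
  obtain ⟨f, hf⟩ := exists_prime_orderOf_dvd_card' q hdvd
  have hQ : IsPGroup q (Subgroup.zpowers f) :=
    .of_card (n := 1) (by rw [Nat.card_zpowers, hf, pow_one])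
  refine exists_dvd_pow_sub_one_of_fixedPoints_ne_top hP hQ hpq fun htop ↦ ?_
  have hf_one : f = 1 := by
    ext x
    have hx : x ∈ FixedPoints.subgroup (Subgroup.zpowers f) P := htop ▸ Subgroup.mem_top x
    exact hx ⟨f, Subgroup.mem_zpowers f⟩
  rw [hf_one, orderOf_one] at hf
  exact (Fact.out : q.Prime).ne_one hf.symm

theorem dvd_pow_sub_one_of_dvd_card_mulAut (hP : Nat.card P = p ^ k) (hk : k ≤ 2) (hpq : p ≠ q)
    (hdvd : q ∣ Nat.card (MulAut P)) : q ∣ p ^ k - 1 := by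
  obtain ⟨i, hi, hik, hqi⟩ := exists_dvd_pow_sub_one_of_dvd_card_mulAut hP hpq hdvd
  have hi_dvd : i ∣ k := by interval_cases k <;> interval_cases i <;> norm_num
  exact hqi.trans (Nat.pow_sub_one_dvd_pow_sub_one p hi_dvd)

end PrimePowerOrder

variable {G : Type*} [Group G]

theorem normalizer_le_centralizer_of_coprime (H : Subgroup G) [IsMulCommutative H]
    (h : (Nat.card (MulAut H)).Coprime H.index) :
    Subgroup.normalizer (H : Set G) ≤ Subgroup.centralizer (H : Set G) := by
  rw [← Subgroup.relIndex_eq_one]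
  refine Nat.eq_one_of_dvd_coprimes h ?_ ?_
  · rw [Subgroup.relIndex, ← Subgroup.normalizerMonoidHom_ker, Subgroup.index_ker]
    exact Subgroup.card_subgroup_dvd_card _
  · exact (Subgroup.relIndex_dvd_of_le_left _ H.le_centralizer).trans
      (Subgroup.relIndex_dvd_index_of_le Subgroup.le_normalizer)

variable [Finite G]

open scoped IsMulCommutative in
theorem not_dvd_card_commutator {p : ℕ} [Fact p.Prime] (P : Sylow p G) [IsMulCommutative P]
    (h : (Nat.card (MulAut P)).Coprime (P : Subgroup G).index) :
    ¬p ∣ Nat.card (commutator G) := by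
  have hP := normalizer_le_centralizer_of_coprime (P : Subgroup G) h
  have hker : commutator G ≤ (MonoidHom.transferSylow P hP).ker :=
    Abelianization.commutator_subset_ker _
  exact fun hdvd ↦ MonoidHom.not_dvd_card_ker_transferSylow P hP
    (hdvd.trans (Subgroup.card_dvd_of_le hker))

theorem coprime_card_mulAut_index_sylow {p : ℕ} [Fact p.Prime] (P : Sylow p G)
    (hle : (Nat.card G).factorization p ≤ 2)
    (hndvd : ∀ q ∈ (Nat.card G).primeFactors, q ≠ p → ¬q ∣ p ^ (Nat.card G).factorization p - 1) :
    (Nat.card (MulAut P)).Coprime (P : Subgroup G).index := by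
  refine Nat.coprime_of_dvd fun q hq hq_aut hq_index ↦ ?_
  have : Fact q.Prime := ⟨hq⟩
  have hpq : p ≠ q := by
    rintro rfl
    exact P.not_dvd_index hq_index
  have hq_mem : q ∈ (Nat.card G).primeFactors :=
    Nat.mem_primeFactors.2 ⟨hq, hq_index.trans (Subgroup.index_dvd_card _), Nat.card_pos.ne'⟩
  exact hndvd q hq_mem hpq.symm
    (dvd_pow_sub_one_of_dvd_card_mulAut P.card_eq_multiplicity hle hpq hq_aut)

theorem isMulCommutative_of_forall_factorization
    (hle : ∀ p ∈ (Nat.card G).primeFactors, (Nat.card G).factorization p ≤ 2)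
    (hndvd : ∀ p ∈ (Nat.card G).primeFactors, ∀ q ∈ (Nat.card G).primeFactors, p ≠ q →
      ¬p ∣ q ^ (Nat.card G).factorization q - 1) :
    IsMulCommutative G := by
  rw [← commutator_eq_bot_iff, ← Subgroup.card_eq_one]
  refine Nat.eq_one_iff_not_exists_prime_dvd.2 fun p hp hdvd ↦ ?_
  have : Fact p.Prime := ⟨hp⟩
  have hp_mem : p ∈ (Nat.card G).primeFactors :=
    Nat.mem_primeFactors.2 ⟨hp, hdvd.trans (Subgroup.card_subgroup_dvd_card _), Nat.card_pos.ne'⟩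
  let P : Sylow p G := default
  have : IsMulCommutative P :=
    isMulCommutative_of_card_eq_prime_pow P.card_eq_multiplicity (hle p hp_mem)
  exact not_dvd_card_commutator P (coprime_card_mulAut_index_sylow P (hle p hp_mem)
    fun q hq hqp ↦ hndvd q hq p hp_mem hqp) hdvd

end Sufficiency

theorem isAbelianNumber_iff {n : ℕ} (hn : n ≠ 0) :
    IsAbelianNumber n ↔
      (∀ p ∈ n.primeFactors, n.factorization p ≤ 2) ∧
        ∀ p ∈ n.primeFactors, ∀ q ∈ n.primeFactors, p ≠ q →
          ¬p ∣ q ^ n.factorization q - 1 := by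
  constructor
  · exact fun h ↦ ⟨fun p hp ↦ h.factorization_le_two hn (Nat.prime_of_mem_primeFactors hp),
      fun p hp q hq hpq ↦ h.not_dvd_pow_factorization_sub_one hn hp hq hpq⟩
  · rintro ⟨hle, hndvd⟩ G _ _ rfl
    exact isMulCommutative_of_forall_factorization hle hndvd

namespace SkewBrace

/-- The trivial skew brace on an additive group, whose two operations agree. -/
abbrev ofAddGroup (A : Type*) [AddGroup A] : SkewBrace A :=
  { ‹AddGroup A›, (inferInstance : Group (Multiplicative A)) with
    skew_left_distrib := fun a b c ↦ by
      change a + (b + c) = a + b - a + (a + c)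
      rw [← add_assoc (a + b - a), sub_add_cancel, add_assoc] }

theorem forall_add_comm_iff_isAbelianNumber (n : ℕ) :
    (∀ (A : Type) [Fintype A] [SkewBrace A], Fintype.card A = n → ∀ a b : A, a + b = b + a) ↔
      IsAbelianNumber n := by
  constructor
  · intro h G _ _ hG
    have := Fintype.ofFinite (Additive G)
    let _ := ofAddGroup (Additive G)
    have hcard : Fintype.card (Additive G) = n := by
      rw [Fintype.card_eq_nat_card, Nat.card_congr Additive.toMul, hG]
    exact .of_comm fun a b ↦ h (Additive G) hcard (.ofMul a) (.ofMul b)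
  · intro h A _ _ hA a b
    have : IsMulCommutative (Multiplicative A) :=
      h _ (by rw [Nat.card_congr Multiplicative.toAdd, Nat.card_eq_fintype_card, hA])
    exact mul_comm' (Multiplicative.ofAdd a) (Multiplicative.ofAdd b)

end SkewBrace

/-- Every skew brace of order `n` is a brace (abelian additive group) iff the
prime factorisation of `n` is cube-free and `p ∤ q^{α_q} - 1` for distinct
primes `p, q` dividing `n`. -/
theorem every_skewBrace_is_brace_iff (n : ℕ) (hn : 0 < n) :
    (∀ (A : Type) [Fintype A] [SkewBrace A], Fintype.card A = n →
      (∀ a b : A, a + b = b + a)) ↔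
    ((∀ p ∈ n.primeFactors, n.factorization p ≤ 2) ∧
      (∀ p ∈ n.primeFactors, ∀ q ∈ n.primeFactors, p ≠ q →
        ¬ p ∣ q ^ n.factorization q - 1)) :=
  (SkewBrace.forall_add_comm_iff_isAbelianNumber n).trans (isAbelianNumber_iff hn.ne')
end

section
/- Let n be a natural number with prime factorisation n = p_1^{α_1} ⋯ p_t^{α_t} (the p_i distinct primes). Then every skew brace of order n is two-sided if and only if α_i ≤ 2 for every i and p_i does not divide p_j^{α_j} − 1 for all i ≠ j. -/
/-!
If `(A,∘)` is commutative, left distributivity is right distributivity. A group `G` whose order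
satisfies the numerical condition is abelian (Dickson): for a Sylow `p`-subgroup `P`, of order `p`
or `p²`, fixed-point counting shows that a `q`-group with `q ≠ p` acts trivially on `P`, so
`N(P) = C(P)`, and Burnside's transfer shows that no prime `p` divides the order of `[G, G]`.

Conversely, let `G` act on an abelian group `A` by `σ`, and let `f : A → G` be a homomorphism
constant on orbits. Then `a ∘ b = a + σ (f a) b` is a skew brace, and it is two-sided exactly when
`(σ (f a) - 1) (σ (f b) - 1) = 0` for all `a`, `b`. This fails for the unipotent Jordan block of
size `3` (`p³`, `p` odd), for `±1` on `ℤ/8`, and for a root of unity of order `p` acting on the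
field with `q ^ α` elements when `p ∣ q ^ α - 1`. Multiplying by a trivial brace reaches every
multiple of these orders.
-/

namespace SkewBrace

open Multiplicative (ofAdd)

/-- A skew brace is two-sided if `∘` (written `*`) is also skew distributive on the right. -/
def IsTwoSided (A : Type*) [SkewBrace A] : Prop :=
  ∀ a b c : A, (a + b) * c = a * c - c + b * c

theorem isTwoSided_of_isMulCommutative (A : Type*) [SkewBrace A] [IsMulCommutative A] :
    IsTwoSided A := fun a b c => by
  rw [mul_comm' (a + b), mul_comm' a, mul_comm' b, skew_left_distrib]

/-- The direct product of two skew braces, with both operations componentwise. -/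
instance instProd {A B : Type*} [SkewBrace A] [SkewBrace B] : SkewBrace (A × B) where
  skew_left_distrib _ _ _ := Prod.ext (skew_left_distrib _ _ _) (skew_left_distrib _ _ _)

theorem IsTwoSided.of_prod {A B : Type*} [SkewBrace A] [SkewBrace B] (h : IsTwoSided (A × B)) :
    IsTwoSided A :=
  fun a b c => congrArg Prod.fst (h (a, 0) (b, 0) (c, 0))

section Construction

variable {A G : Type*} [Group G]

/-- The skew brace with additive group `A` and `a ∘ b = a + σ (f a) b`, for an action `σ` of `G` on
`A` and a homomorphism `f : A → G` that is constant on the orbits of `σ`. -/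
abbrev ofInvariant [AddGroup A] (f : Multiplicative A →* G) (σ : G →* AddMonoid.End A)
    (hf : ∀ g a, f (ofAdd (σ g a)) = f (ofAdd a)) : SkewBrace A where
  __ := ‹AddGroup A›
  __ : Group A :=
    letI : Mul A := ⟨fun a b => a + σ (f (ofAdd a)) b⟩
    letI : One A := ⟨0⟩
    letI : Inv A := ⟨fun a => σ (f (ofAdd a))⁻¹ (-a)⟩
    Group.ofRightAxioms
      (fun a b c => by
        change a + σ (f (ofAdd a)) b + σ (f (ofAdd (a + σ (f (ofAdd a)) b))) c =
          a + σ (f (ofAdd a)) (b + σ (f (ofAdd b)) c)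
        simp [hf, add_assoc])
      (fun a => by change a + σ (f (ofAdd a)) 0 = a; simp)
      (fun a => by
        change a + (σ (f (ofAdd a)) * σ (f (ofAdd a))⁻¹) (-a) = 0
        rw [← map_mul, mul_inv_cancel, map_one, AddMonoid.End.one_apply, add_neg_cancel])
  skew_left_distrib a b c := by
    change a + σ (f (ofAdd a)) (b + c) = a + σ (f (ofAdd a)) b - a + (a + σ (f (ofAdd a)) c)
    rw [map_add, ← add_assoc, ← add_assoc, sub_add_cancel]

theorem isTwoSided_ofInvariant_iff [AddCommGroup A] (f : Multiplicative A →* G)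
    (σ : G →* AddMonoid.End A) (hf : ∀ g a, f (ofAdd (σ g a)) = f (ofAdd a)) :
    @IsTwoSided A (ofInvariant f σ hf) ↔
      ∀ a b c : A, σ (f (ofAdd a)) (σ (f (ofAdd b)) c - c) = σ (f (ofAdd b)) c - c := by
  refine forall₃_congr fun a b c => ?_
  change a + b + σ (f (ofAdd a * ofAdd b)) c =
    a + σ (f (ofAdd a)) c - c + (b + σ (f (ofAdd b)) c) ↔ _
  rw [map_mul, map_mul, AddMonoid.End.coe_mul, Function.comp_apply, map_sub, ← sub_eq_zero,
    ← sub_eq_zero (b := σ _ c - c)]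
  constructor <;> intro h <;> rw [← h] <;> abel

/-- The trivial skew brace on an additive group: `a ∘ b = a + b`. -/
abbrev trivial (A : Type*) [AddGroup A] : SkewBrace A :=
  ofInvariant (1 : Multiplicative A →* Unit) 1 fun _ _ => rfl

/-- The skew brace `a ∘ b = a ± b` on an abelian group, the sign being given by a character `f`. -/
abbrev ofSign [AddCommGroup A] (f : Multiplicative A →* ℤˣ) : SkewBrace A :=
  ofInvariant f (DistribMulAction.toAddMonoidEnd ℤˣ A) fun u a => by
    change f (ofAdd (u • a)) = f (ofAdd a)
    obtain rfl | rfl := Int.units_eq_one_or u <;> simp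

theorem four_nsmul_eq_zero_of_isTwoSided_ofSign [AddCommGroup A] {f : Multiplicative A →* ℤˣ}
    (hf : f ≠ 1) (h : @IsTwoSided A (ofSign f)) (x : A) : 4 • x = 0 := by
  obtain ⟨a, ha⟩ := DFunLike.ne_iff.1 hf
  have hx : f a • (f a • x - x) = f a • x - x :=
    (isTwoSided_ofInvariant_iff f _ _).1 h a.toAdd a.toAdd x
  rw [(Int.units_eq_one_or (f a)).resolve_left ha, ← sub_eq_zero] at hx
  simp only [Units.neg_smul, one_smul] at hx
  rw [← hx]
  abel

/-- The substitution `X ↦ X + t` on quadratic polynomials, where `(x, y, z)` stands for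
`x + y X + z X²`. -/
@[simps]
def quadraticTranslate {R : Type*} [CommRing R] (t : R) : R × R × R →+ R × R × R where
  toFun v := (v.1 + t * v.2.1 + t ^ 2 * v.2.2, v.2.1 + 2 * t * v.2.2, v.2.2)
  map_zero' := by simp
  map_add' v w := by ext <;> simp <;> ring

/-- The skew brace on quadratic polynomials in which `v` acts on the second factor by the
substitution `X ↦ X + t`, where `t` is the (translation invariant) coefficient of `X²` in `v`. -/
abbrev ofQuadraticTranslate (R : Type*) [CommRing R] : SkewBrace (R × R × R) :=
  ofInvariant ((AddMonoidHom.snd R R).comp (AddMonoidHom.snd R (R × R))).toMultiplicative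
    { toFun t := quadraticTranslate t.toAdd
      map_one' := AddMonoidHom.ext fun v => by
        change quadraticTranslate 0 v = v
        ext <;> simp
      map_mul' s t := AddMonoidHom.ext fun v => by
        change _ = quadraticTranslate s.toAdd (quadraticTranslate t.toAdd v)
        ext <;> simp <;> ring }
    fun _ _ => rfl

theorem two_eq_zero_of_isTwoSided_ofQuadraticTranslate {R : Type*} [CommRing R]
    (h : @IsTwoSided _ (ofQuadraticTranslate R)) : (2 : R) = 0 := by
  let v : R × R × R := (0, 0, 1)
  have hv : quadraticTranslate 1 (quadraticTranslate 1 v - v) = quadraticTranslate 1 v - v :=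
    (isTwoSided_ofInvariant_iff _ _ _).1 h v v v
  simpa [v] using congrArg Prod.fst hv

/-- The skew brace with additive group `M × G` and multiplicative group the semidirect product
`M ⋊ G`, for an abelian group `G` acting on an abelian group `M`. -/
abbrev ofDistribMulAction (G M : Type*) [CommGroup G] [AddCommGroup M] [DistribMulAction G M] :
    SkewBrace (M × Additive G) :=
  ofInvariant (AddMonoidHom.snd M (Additive G)).toMultiplicativeLeft
    { toFun g := (DistribMulAction.toAddMonoidEnd G M g).prodMap (AddMonoidHom.id _)
      map_one' := AddMonoidHom.ext fun x => Prod.ext (one_smul G x.1) rfl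
      map_mul' g h := AddMonoidHom.ext fun x => Prod.ext (mul_smul g h x.1) rfl }
    fun _ _ => rfl

theorem smul_smul_sub_of_isTwoSided_ofDistribMulAction {G M : Type*} [CommGroup G]
    [AddCommGroup M] [DistribMulAction G M] (h : @IsTwoSided _ (ofDistribMulAction G M))
    (g g' : G) (x : M) : g • (g' • x - x) = g' • x - x :=
  congrArg Prod.fst <| (isTwoSided_ofInvariant_iff _ _ _).1 h (0, .ofMul g) (0, .ofMul g') (x, 0)

end Construction

/-- Every skew brace of order `n` is two-sided. -/
def ForcesTwoSided (n : ℕ) : Prop :=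
  ∀ (A : Type) [Fintype A] [SkewBrace A], Fintype.card A = n → IsTwoSided A

namespace ForcesTwoSided

variable {n : ℕ}

theorem isTwoSided_of_card_dvd (h : ForcesTwoSided n) (hn : n ≠ 0) {A : Type} [SkewBrace A]
    (hA : Nat.card A ∣ n) : IsTwoSided A := by
  obtain ⟨m, rfl⟩ := hA
  obtain ⟨hA, hm⟩ := mul_ne_zero_iff.1 hn
  have : Finite A := Nat.finite_of_card_ne_zero hA
  have : NeZero m := ⟨hm⟩
  have := Fintype.ofFinite A
  let := SkewBrace.trivial (ZMod m)
  exact (h (A × ZMod m) (by simp [Nat.card_eq_fintype_card])).of_prod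

theorem not_two_pow_three_dvd (h : ForcesTwoSided n) (hn : n ≠ 0) : ¬ 2 ^ 3 ∣ n := by
  intro hdvd
  let f : Multiplicative (ZMod 8) →* ℤˣ :=
    { toFun a := (-1) ^ ZMod.castHom (by norm_num : 2 ∣ 8) (ZMod 2) a.toAdd
      map_one' := by simp
      map_mul' a b := by simp [uzpow_add] }
  have hf : f ≠ 1 := DFunLike.ne_iff.2 ⟨ofAdd 1, by simp [f]⟩
  let := ofSign f
  have h4 : 4 • (1 : ZMod 8) = 0 :=
    four_nsmul_eq_zero_of_isTwoSided_ofSign hf (h.isTwoSided_of_card_dvd hn (by simpa using hdvd)) 1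
  exact absurd h4 (by decide)

theorem not_prime_pow_three_dvd (h : ForcesTwoSided n) (hn : n ≠ 0) {p : ℕ} (hp : p.Prime) :
    ¬ p ^ 3 ∣ n := by
  intro hdvd
  have : Fact p.Prime := ⟨hp⟩
  let := ofQuadraticTranslate (ZMod p)
  have hcard : Nat.card (ZMod p × ZMod p × ZMod p) = p ^ 3 := by simp; ring
  have h2 : ((2 : ℕ) : ZMod p) = 0 := by
    exact_mod_cast two_eq_zero_of_isTwoSided_ofQuadraticTranslate
      (h.isTwoSided_of_card_dvd hn (hcard ▸ hdvd))
  obtain rfl := (Nat.prime_dvd_prime_iff_eq hp Nat.prime_two).1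
    ((ZMod.natCast_eq_zero_iff 2 p).1 h2)
  exact h.not_two_pow_three_dvd hn hdvd

theorem not_dvd_pow_sub_one (h : ForcesTwoSided n) (hn : n ≠ 0) {p q k : ℕ} (hp : p.Prime)
    (hq : q.Prime) (hk : k ≠ 0) (hdvd : q ^ k * p ∣ n) : ¬ p ∣ q ^ k - 1 := by
  intro hpq
  have : Fact p.Prime := ⟨hp⟩
  have : Fact q.Prime := ⟨hq⟩
  let F := GaloisField q k
  have hF : Nat.card F = q ^ k := GaloisField.card q k hk
  obtain ⟨ζ, hζ⟩ := exists_prime_orderOf_dvd_card' (G := Fˣ) p (by rwa [Nat.card_units, hF])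
  let := ofDistribMulAction (Subgroup.zpowers ζ) F
  have hcard : Nat.card (F × Additive (Subgroup.zpowers ζ)) = q ^ k * p := by
    rw [Nat.card_prod, hF, Nat.card_congr Additive.toMul, Nat.card_zpowers, hζ]
  let g : Subgroup.zpowers ζ := ⟨ζ, Subgroup.mem_zpowers ζ⟩
  have hfix : (ζ : F) * (ζ * 1 - 1) = ζ * 1 - 1 :=
    smul_smul_sub_of_isTwoSided_ofDistribMulAction
      (h.isTwoSided_of_card_dvd hn (hcard ▸ hdvd)) g g (1 : F)
  have hζ1 : (ζ : F) = 1 := by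
    have : ((ζ : F) - 1) ^ 2 = 0 := by linear_combination hfix
    exact sub_eq_zero.1 (pow_eq_zero_iff two_ne_zero |>.1 this)
  rw [(Units.ext hζ1 : ζ = 1), orderOf_one] at hζ
  exact hp.one_lt.ne hζ

end ForcesTwoSided
end SkewBrace

section Dickson

open Subgroup

theorem isMulCommutative_of_card_eq_prime_pow_of_le_two {G : Type*} [Group G] {p k : ℕ}
    (hp : p.Prime) (hk : k ≤ 2) (hG : Nat.card G = p ^ k) : IsMulCommutative G := by
  have : Fact p.Prime := ⟨hp⟩
  interval_cases k
  · have := (Nat.card_eq_one_iff_unique.1 (hG.trans (pow_zero p))).1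
    exact .of_comm fun _ _ => Subsingleton.elim _ _
  · have := isCyclic_of_prime_card (hG.trans (pow_one p))
    infer_instance
  · exact IsPGroup.isMulCommutative_of_card_eq_prime_sq hG

theorem eq_one_of_isPGroup_of_not_dvd {Q P : Type*} [Group Q] [Group P] {p q k : ℕ}
    (hp : p.Prime) (hq : q.Prime) (hqp : q ≠ p) (hQ : IsPGroup q Q) (hP : Nat.card P = p ^ k)
    (hdvd : ∀ i, 0 < i → i ≤ k → ¬ q ∣ p ^ i - 1) (φ : Q →* MulAut P) : φ = 1 := by
  have : Fact q.Prime := ⟨hq⟩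
  have : Finite P := Nat.finite_of_card_ne_zero (hP ▸ (pow_pos hp.pos k).ne')
  let := MulDistribMulAction.compHom P φ
  obtain ⟨j, hjk, hj⟩ := (Nat.dvd_prime_pow hp).1
    (hP ▸ card_subgroup_dvd_card (FixedPoints.subgroup Q P))
  have hmod : p ^ j ≡ p ^ k [MOD q] := by
    rw [← hj, ← hP]
    exact (hQ.card_modEq_card_fixedPoints P).symm
  have hq_dvd : q ∣ p ^ j * (p ^ (k - j) - 1) := by
    rw [Nat.mul_sub, ← pow_add, mul_one, Nat.add_sub_cancel' hjk]
    exact (Nat.modEq_iff_dvd' (Nat.pow_le_pow_right hp.pos hjk)).1 hmod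
  have hq_not_dvd : ¬ q ∣ p ^ j := fun h =>
    hqp ((Nat.prime_dvd_prime_iff_eq hq hp).1 (hq.dvd_of_dvd_pow h))
  have hkj : k ≤ j := by
    by_contra! hlt
    exact hdvd (k - j) (Nat.sub_pos_of_lt hlt) (Nat.sub_le k j)
      ((hq.dvd_mul.1 hq_dvd).resolve_left hq_not_dvd)
  have htop : FixedPoints.subgroup Q P = ⊤ :=
    eq_top_of_card_eq _ (by rw [hj, hP, hjk.antisymm hkj])
  ext x y
  exact (htop ▸ mem_top y : y ∈ FixedPoints.subgroup Q P) x

variable {G : Type*} [Group G]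

theorem le_centralizer_of_isPGroup_of_not_dvd {Q P : Subgroup G} {p q k : ℕ} (hp : p.Prime)
    (hq : q.Prime) (hqp : q ≠ p) (hQ : IsPGroup q Q) (hQP : Q ≤ normalizer (P : Set G))
    (hP : Nat.card P = p ^ k) (hdvd : ∀ i, 0 < i → i ≤ k → ¬ q ∣ p ^ i - 1) :
    Q ≤ centralizer (P : Set G) := by
  have hφ := eq_one_of_isPGroup_of_not_dvd hp hq hqp hQ hP hdvd
    (P.normalizerMonoidHom.comp (inclusion hQP))
  intro x hx
  have hker : inclusion hQP ⟨x, hx⟩ ∈ P.normalizerMonoidHom.ker :=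
    MonoidHom.mem_ker.2 (DFunLike.congr_fun hφ ⟨x, hx⟩)
  rwa [normalizerMonoidHom_ker] at hker

theorem le_of_forall_isPGroup_le {H K : Subgroup G} [Finite K]
    (h : ∀ q, q.Prime → q ∣ Nat.card K → ∀ Q : Subgroup G, IsPGroup q Q → Q ≤ K → Q ≤ H) :
    K ≤ H := by
  rw [← relIndex_eq_one, Nat.eq_one_iff_not_exists_prime_dvd]
  intro q hq hdvd
  have : Fact q.Prime := ⟨hq⟩
  obtain ⟨Q⟩ : Nonempty (Sylow q K) := inferInstance
  have hQH : (Q : Subgroup K) ≤ H.subgroupOf K := map_le_iff_le_comap.1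
    (h q hq (hdvd.trans (index_dvd_card _)) _ (Q.2.map K.subtype) (map_subtype_le _))
  exact Q.not_dvd_index (hdvd.trans (index_dvd_of_le hQH))

variable [Finite G]

theorem normalizer_le_centralizer_of_not_dvd {p : ℕ} [Fact p.Prime] (P : Sylow p G)
    [IsMulCommutative P] {k : ℕ} (hP : Nat.card P = p ^ k)
    (hdvd : ∀ q, q.Prime → q ≠ p → q ∣ Nat.card G → ∀ i, 0 < i → i ≤ k → ¬ q ∣ p ^ i - 1) :
    normalizer (P : Set G) ≤ centralizer (P : Set G) := by
  refine le_of_forall_isPGroup_le fun q hq hqN Q hQ hQN => ?_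
  obtain rfl | hqp := eq_or_ne q p
  · have hQP : Q ≤ P :=
      inf_eq_left.1 ((hQ.inf_normalizer_sylow P).symm.trans (inf_eq_left.2 hQN))
    exact hQP.trans (le_centralizer _)
  · exact le_centralizer_of_isPGroup_of_not_dvd Fact.out hq hqp hQ hQN hP
      (hdvd q hq hqp (hqN.trans (card_subgroup_dvd_card _)))

theorem isMulCommutative_of_forall_normalizer_le_centralizer
    (h : ∀ p [Fact p.Prime] (P : Sylow p G), normalizer (P : Set G) ≤ centralizer (P : Set G)) :
    IsMulCommutative G := by
  rw [← commutator_eq_bot_iff, ← card_eq_one, Nat.eq_one_iff_not_exists_prime_dvd]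
  intro p hp hdvd
  have : Fact p.Prime := ⟨hp⟩
  obtain ⟨P⟩ : Nonempty (Sylow p G) := inferInstance
  have : IsMulCommutative P := .of_comm fun a b => Subtype.ext (h p P (le_normalizer b.2) a a.2)
  open scoped IsMulCommutative in
  have hker : commutator G ≤ (MonoidHom.transferSylow P (h p P)).ker :=
    Abelianization.commutator_subset_ker _
  exact MonoidHom.not_dvd_card_ker_transferSylow P (h p P) (hdvd.trans (card_dvd_of_le hker))

theorem isMulCommutative_of_factorization_card
    (hle : ∀ p ∈ (Nat.card G).primeFactors, (Nat.card G).factorization p ≤ 2)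
    (hdvd : ∀ p ∈ (Nat.card G).primeFactors, ∀ q ∈ (Nat.card G).primeFactors, p ≠ q →
      ¬ p ∣ q ^ (Nat.card G).factorization q - 1) : IsMulCommutative G := by
  refine isMulCommutative_of_forall_normalizer_le_centralizer fun p hp P => ?_
  have hle' : (Nat.card G).factorization p ≤ 2 := by
    by_cases hpG : p ∈ (Nat.card G).primeFactors
    · exact hle p hpG
    · rw [← Nat.support_factorization, Finsupp.notMem_support_iff] at hpG
      lia
  have := isMulCommutative_of_card_eq_prime_pow_of_le_two hp.out hle' P.card_eq_multiplicity
  refine normalizer_le_centralizer_of_not_dvd P P.card_eq_multiplicity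
    fun q hq hqp hqG i hi hik hqi => ?_
  have hpG : p ∈ (Nat.card G).primeFactors := by
    rw [← Nat.support_factorization, Finsupp.mem_support_iff]
    lia
  have hi_dvd : i ∣ (Nat.card G).factorization p := by
    obtain rfl | rfl : i = 1 ∨ i = (Nat.card G).factorization p := by lia
    exacts [one_dvd _, dvd_rfl]
  exact hdvd q (Nat.mem_primeFactors.2 ⟨hq, hqG, Nat.card_pos.ne'⟩) p hpG hqp
    (hqi.trans (Nat.pow_sub_one_dvd_pow_sub_one p hi_dvd))

end Dickson

/-- Every skew brace of order `n` is two-sided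
(`(a + b) ∘ c = a ∘ c - c + b ∘ c`) iff the prime factorisation of `n` is
cube-free and `p ∤ q^{α_q} - 1` for distinct primes `p, q` dividing `n`. -/
theorem every_skewBrace_is_two_sided_iff (n : ℕ) (hn : 0 < n) :
    (∀ (A : Type) [Fintype A] [SkewBrace A], Fintype.card A = n →
      (∀ a b c : A, (a + b) * c = a * c - c + b * c)) ↔
    ((∀ p ∈ n.primeFactors, n.factorization p ≤ 2) ∧
      (∀ p ∈ n.primeFactors, ∀ q ∈ n.primeFactors, p ≠ q →
        ¬ p ∣ q ^ n.factorization q - 1)) := by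
  constructor
  · intro h
    have h : SkewBrace.ForcesTwoSided n := h
    refine ⟨fun p hp => ?_, fun p hp q hq hpq => ?_⟩
    · have hp := Nat.prime_of_mem_primeFactors hp
      by_contra! hlt
      exact h.not_prime_pow_three_dvd hn.ne' hp ((hp.pow_dvd_iff_le_factorization hn.ne').2 hlt)
    · have hp' := Nat.prime_of_mem_primeFactors hp
      have hq' := Nat.prime_of_mem_primeFactors hq
      have hcop : (q ^ n.factorization q).Coprime p :=
        ((Nat.coprime_primes hq' hp').2 hpq.symm).pow_left _
      exact h.not_dvd_pow_sub_one hn.ne' hp' hq' (Finsupp.mem_support_iff.1 hq)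
        (hcop.mul_dvd_of_dvd_of_dvd (Nat.ordProj_dvd n q) (Nat.dvd_of_mem_primeFactors hp))
  · rintro ⟨hle, hdvd⟩ A _ _ rfl
    rw [← Nat.card_eq_fintype_card] at hle hdvd
    have := isMulCommutative_of_factorization_card hle hdvd
    exact SkewBrace.isTwoSided_of_isMulCommutative A
end
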